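/- arXiv:1804.03982 — 2 statements merged into one kernel-verified Lean document; each statement's English description precedes it below -/
import Mathlib

section
/- Let k₁ ≤ k₂ be nonnegative integers, s = ⌊(k₂−k₁)/2⌋, and 0 ≤ x < 1. Then Ξ₂^{[k₁,k₂]}(x) := (1/4)∫₀^π∫₀^π cos(k₁θ₁)cos(k₂θ₂)/√(1+x²−x(cos θ₁+cos θ₂)) dθ₁dθ₂ equals (π²(1/2)_{k₁+k₂}(2x)^{k₁+k₂})/(4^{k₁+k₂+1} k₁! k₂!) · ∑_{j=0}^{s} [((k₁−k₂)/2)_j ((k₁−k₂+1)/2)_j (k₁+k₂+1/2)_{2j} x^{2j}] / [(k₁+1)_j (k₂+1)_j (k₁+k₂+1)_j j!] · ₃F₂(1/2+j, k₁+1/2+j, k₁+k₂+1/2+2j; k₂+1+j, k₁+k₂+1+j; −x²). -/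
open Real

/-- The rising factorial (Pochhammer symbol) over ℝ. -/
noncomputable def rising (a : ℝ) (n : ℕ) : ℝ := (ascPochhammer ℝ n).eval a

/-- Clausen's generalized hypergeometric series ₃F₂(a₁,a₂,a₃;b₁,b₂;x). -/
noncomputable def clausen3F2 (a₁ a₂ a₃ b₁ b₂ x : ℝ) : ℝ :=
  ∑' n : ℕ, rising a₁ n * rising a₂ n * rising a₃ n /
    (rising b₁ n * rising b₂ n * n.factorial) * x ^ n

/-- The rank-2 Melnikov function Ξ₂^{[k₁,k₂]}. -/
noncomputable def Xi2 (k₁ k₂ : ℕ) (x : ℝ) : ℝ :=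
  (1 / 4) * ∫ θ₁ in (0:ℝ)..π, ∫ θ₂ in (0:ℝ)..π,
    Real.cos (k₁ * θ₁) * Real.cos (k₂ * θ₂) /
      Real.sqrt (1 + x ^ 2 - x * (Real.cos θ₁ + Real.cos θ₂))


lemma rising_zero (a : ℝ) : rising a 0 = 1 := by simp [rising]

lemma rising_succ (a : ℝ) (n : ℕ) : rising a (n + 1) = rising a n * (a + n) := by
  simp [rising, ascPochhammer_succ_eval]

lemma rising_add (a : ℝ) (m n : ℕ) : rising a (m + n) = rising a m * rising (a + m) n := by
  induction n with
  | zero => simp [rising_zero]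
  | succ n ih => rw [← add_assoc, rising_succ, rising_succ, ih]; push_cast; ring

lemma rising_succ' (a : ℝ) (n : ℕ) : rising a (n + 1) = a * rising (a + 1) n := by
  rw [add_comm, rising_add, rising_succ, rising_zero]; push_cast; ring

lemma rising_pos {a : ℝ} (ha : 0 < a) (n : ℕ) : 0 < rising a n := ascPochhammer_pos n a ha

lemma rising_fact (k n : ℕ) : (k.factorial : ℝ) * rising ((k : ℝ) + 1) n = ((k + n).factorial : ℝ) := by
  induction n with
  | zero => simp [rising_zero]
  | succ n ih =>
    rw [rising_succ, ← mul_assoc, ih, ← add_assoc, Nat.factorial_succ]; push_cast; ring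

/-- reflection -/
lemma rising_reflect (a : ℝ) (n : ℕ) : rising (1 - a - n) n = (-1) ^ n * rising a n := by
  induction n with
  | zero => simp [rising_zero]
  | succ n ih =>
    rw [rising_succ', rising_succ]
    have : (1 - a - ((n + 1 : ℕ) : ℝ)) + 1 = 1 - a - n := by push_cast; ring
    rw [this, ih]; push_cast; ring

/-- Pfaff–Saalschütz, polynomial form (partial sums). -/
lemma saal_partial (A B D : ℝ) (n : ℕ) (p : ℕ) (hp : p ≤ n) :
    ∑ j ∈ Finset.range (p + 1),
      (((n + 1).choose j : ℝ) * rising A j * rising B j * rising (A + B + D + j) (n + 1 - j)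
          * rising D (n + 1 - j)
        - (B + D + n) * (A + D + n) * ((n.choose j : ℝ) * rising A j * rising B j
          * rising (A + B + D + j) (n - j) * rising D (n - j)))
      = - ((n.choose p : ℝ) * rising A (p + 1) * rising B (p + 1)
          * rising (A + B + D + p) (n - p) * rising D (n - p)) := by
  induction p with
  | zero =>
    simp only [zero_add, Finset.sum_range_one, Nat.choose_zero_right, Nat.sub_zero, rising_zero,
      rising_succ, Nat.cast_zero]
    push_cast
    ring
  | succ p ih =>
    rw [Finset.sum_range_succ, ih (by omega)]
    obtain ⟨q, rfl⟩ : ∃ q, n = p + 1 + q := ⟨n - (p + 1), by omega⟩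
    have e1 : p + 1 + q - p = q + 1 := by omega
    have e2 : p + 1 + q + 1 - (p + 1) = q + 1 := by omega
    have e3 : p + 1 + q - (p + 1) = q := by omega
    rw [e1, e2, e3, Nat.choose_succ_succ (p + 1 + q) p]
    have hc : ((p + 1 + q).choose (p + 1) : ℝ) * (p + 1) = (p + 1 + q).choose p * (q + 1) := by
      have := Nat.choose_succ_right_eq (p + 1 + q) p
      rw [e1] at this
      exact_mod_cast this
    have h1 : rising (A + B + D + p) (q + 1) =
        (A + B + D + p) * rising (A + B + D + ((p + 1 : ℕ) : ℝ)) q := by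
      rw [rising_succ']; push_cast; ring_nf
    rw [h1, rising_succ _ q, rising_succ _ q, rising_succ A (p + 1), rising_succ B (p + 1)]
    push_cast
    generalize rising (A + B + D + ((p : ℝ) + 1)) q = R
    generalize rising D q = S
    generalize rising A (p + 1) = U
    generalize rising B (p + 1) = V
    have hc' : ((p + 1 + q).choose (p + 1) : ℝ) * (p + 1) - (p + 1 + q).choose p * (q + 1) = 0 := by
      linarith
    linear_combination (- U * V * R * S * (D + q)) * hc'

lemma saal (A B D : ℝ) (n : ℕ) :
    ∑ x ∈ Finset.HasAntidiagonal.antidiagonal n, ((n.choose x.1 : ℝ) * rising A x.1 * rising B x.1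
        * rising (A + B + D + x.1) x.2 * rising D x.2)
      = rising (B + D) n * rising (A + D) n := by
  rw [Finset.Nat.sum_antidiagonal_eq_sum_range_succ_mk]
  induction n with
  | zero => simp [rising_zero]
  | succ n ih =>
    rw [Finset.sum_range_succ]
    have h := saal_partial A B D n n le_rfl
    rw [Finset.sum_sub_distrib, ← Finset.mul_sum, ih] at h
    simp only [Nat.succ_eq_add_one, Nat.choose_self, Nat.sub_self, rising_zero] at h ⊢
    rw [rising_succ (B + D), rising_succ (A + D)]
    linear_combination h

/-- the product form used for the duplication-type factor. -/
lemma dup (K i : ℕ) : (4 : ℝ) ^ i * (K.factorial : ℝ) * (rising ((K : ℝ) / 2 + 1) i *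
    rising (((K : ℝ) + 1) / 2) i) = ((K + 2 * i).factorial : ℝ) := by
  induction i with
  | zero => simp [rising_zero]
  | succ i ih =>
    rw [show K + 2 * (i + 1) = (K + 2 * i + 1) + 1 by ring, Nat.factorial_succ, Nat.factorial_succ]
    push_cast
    rw [← ih, rising_succ, rising_succ]
    ring

lemma neg_rising (k p l : ℕ) (h : l ≤ p) :
    rising (-((k : ℝ) + p)) l * ((k + (p - l)).factorial : ℝ) = (-1) ^ l * ((k + p).factorial : ℝ) := by
  have h1 := rising_reflect ((k : ℝ) + p + 1 - l) l
  rw [show 1 - ((k : ℝ) + p + 1 - l) - l = -((k : ℝ) + p) by ring] at h1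
  have h2 := rising_fact (k + (p - l)) l
  rw [show k + (p - l) + l = k + p by omega] at h2
  push_cast [Nat.cast_sub h] at h2
  rw [h1, ← h2, show (k : ℝ) + p + 1 - l = k + (p - l) + 1 by ring]; ring

noncomputable def Tco (k₁ k₂ j r l : ℕ) : ℝ :=
  ((k₁ + k₂).factorial : ℝ) * rising (1 / 2) (k₁ + k₂ + 2 * j + 2 * r + l) * (-1) ^ l *
    rising (((k₁ : ℝ) - k₂) / 2) j * rising (((k₁ : ℝ) - k₂ + 1) / 2) j * rising (k₂ + 1 / 2) r /
  (2 ^ (k₁ + k₂) * j.factorial * r.factorial * l.factorial * (k₁ + j).factorial *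
    (k₁ + k₂ + j + r).factorial * (k₂ + j + r).factorial)

noncomputable def lco (k₁ k₂ i l : ℕ) : ℝ :=
  rising (1 / 2) (k₁ + k₂ + 2 * i) / (k₁ + k₂ + 2 * i).factorial / 2 ^ (k₁ + k₂ + 2 * i) *
    ((k₁ + k₂ + 2 * i).choose i) * ((k₁ + k₂ + 2 * i).choose (k₂ + i)) *
    (rising ((k₁ + k₂ + 2 * i : ℕ) + 1 / 2) l / l.factorial * (-1) ^ l)

noncomputable def rco (k₁ k₂ j p : ℕ) : ℝ :=
  rising (1 / 2) (k₁ + k₂) / (2 ^ (k₁ + k₂) * k₁.factorial * k₂.factorial) *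
    (rising (((k₁ : ℝ) - k₂) / 2) j * rising (((k₁ : ℝ) - k₂ + 1) / 2) j *
              rising ((k₁ : ℝ) + k₂ + 1 / 2) (2 * j) /
            (rising ((k₁ : ℝ) + 1) j * rising ((k₂ : ℝ) + 1) j *
              rising ((k₁ : ℝ) + k₂ + 1) j * (j.factorial : ℝ))) *
    (rising (1 / 2 + j) p * rising (k₁ + 1 / 2 + j) p * rising (k₁ + k₂ + 1 / 2 + 2 * j) p /
      (rising (k₂ + 1 + j) p * rising (k₁ + k₂ + 1 + j) p * p.factorial) * (-1) ^ p)

lemma fne (n : ℕ) : (n.factorial : ℝ) ≠ 0 := by exact_mod_cast n.factorial_ne_zero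

lemma lco_eq (k₁ k₂ i l : ℕ) :
    lco k₁ k₂ i l = ∑ x ∈ Finset.HasAntidiagonal.antidiagonal i, Tco k₁ k₂ x.1 x.2 l := by
  have hs := saal (((k₁ : ℝ) - k₂) / 2) (((k₁ : ℝ) - k₂ + 1) / 2) (k₂ + 1 / 2) i
  have hd := dup (k₁ + k₂) i
  rw [show ((k₁ : ℝ) - k₂ + 1) / 2 + (k₂ + 1 / 2) = ((k₁ + k₂ : ℕ) : ℝ) / 2 + 1 by push_cast; ring,
    show ((k₁ : ℝ) - k₂) / 2 + (k₂ + 1 / 2) = (((k₁ + k₂ : ℕ) : ℝ) + 1) / 2 by push_cast; ring] at hs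
  rw [← hs] at hd
  have hL : lco k₁ k₂ i l = rising (1 / 2) (k₁ + k₂ + 2 * i + l) * ((k₁ + k₂ + 2 * i).factorial) *
      (-1) ^ l / (2 ^ (k₁ + k₂) * 4 ^ i * l.factorial * i.factorial * (k₁ + k₂ + i).factorial *
      (k₁ + i).factorial * (k₂ + i).factorial) := by
    unfold lco
    rw [Nat.cast_choose ℝ (show i ≤ k₁ + k₂ + 2 * i by omega),
      Nat.cast_choose ℝ (show k₂ + i ≤ k₁ + k₂ + 2 * i by omega),
      show k₁ + k₂ + 2 * i - i = k₁ + k₂ + i by omega,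
      show k₁ + k₂ + 2 * i - (k₂ + i) = k₁ + i by omega, rising_add _ (k₁ + k₂ + 2 * i) l,
      show (1 / 2 : ℝ) + ((k₁ + k₂ + 2 * i : ℕ) : ℝ) = ((k₁ + k₂ + 2 * i : ℕ) : ℝ) + 1 / 2 by ring,
      pow_add, pow_mul]
    have := fne (k₁ + k₂ + 2 * i)
    have := fne (k₁ + k₂ + i)
    have := fne (k₁ + i)
    have := fne (k₂ + i)
    have := fne i
    have := fne l
    norm_num
    field_simp
  rw [hL, ← hd, Finset.mul_sum, Finset.mul_sum, Finset.sum_mul, Finset.sum_div]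
  apply Finset.sum_congr rfl
  rintro ⟨j, r⟩ hx
  obtain rfl : j + r = i := by simpa using hx
  unfold Tco
  simp only
  have h1 := rising_fact (k₁ + j) r
  rw [show ((k₁ + j : ℕ) : ℝ) + 1 = ((k₁ : ℝ) - k₂) / 2 + ((k₁ : ℝ) - k₂ + 1) / 2 + (k₂ + 1 / 2) + j by
    push_cast; ring, show k₁ + j + r = k₁ + (j + r) by ring] at h1
  rw [← h1, Nat.cast_choose ℝ (show j ≤ j + r by omega), show j + r - j = r by omega,
    show k₁ + k₂ + 2 * (j + r) + l = k₁ + k₂ + 2 * j + 2 * r + l by ring,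
    show k₁ + k₂ + (j + r) = k₁ + k₂ + j + r by ring,
    show k₂ + (j + r) = k₂ + j + r by ring]
  have hR : rising (((k₁ : ℝ) - k₂) / 2 + ((k₁ : ℝ) - k₂ + 1) / 2 + (k₂ + 1 / 2) + j) r ≠ 0 := by
    intro h
    rw [h, mul_zero] at h1
    exact fne _ h1.symm
  have := fne (k₁ + k₂ + j + r)
  have := fne (k₁ + j)
  have := fne (k₂ + j + r)
  have := fne (j + r)
  have := fne j
  have := fne r
  have := fne l
  generalize rising (((k₁ : ℝ) - k₂) / 2 + ((k₁ : ℝ) - k₂ + 1) / 2 + (k₂ + 1 / 2) + j) r = Q at hR ⊢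
  field_simp

lemma rco_eq (k₁ k₂ j p : ℕ) :
    rco k₁ k₂ j p = ∑ x ∈ Finset.HasAntidiagonal.antidiagonal p, Tco k₁ k₂ j x.1 x.2 := by
  have hs := saal (k₂ + 1 / 2) (k₁ + k₂ + 2 * j + p + 1 / 2) (-((k₂ + j : ℕ) + p)) p
  have e1 : rising ((k₁ : ℝ) + k₂ + 2 * j + p + 1 / 2 + (-((k₂ + j : ℕ) + p))) p =
      rising (k₁ + 1 / 2 + j) p := by congr 1; push_cast; ring
  have e2 : rising ((k₂ : ℝ) + 1 / 2 + (-((k₂ + j : ℕ) + p))) p = (-1) ^ p * rising (1 / 2 + j) p := by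
    rw [← rising_reflect]; congr 1; push_cast; ring
  rw [e1, e2] at hs
  have hR : rco k₁ k₂ j p = ((k₁ + k₂).factorial : ℝ) * rising (1 / 2) (k₁ + k₂ + 2 * j + p) *
      rising (((k₁ : ℝ) - k₂) / 2) j * rising (((k₁ : ℝ) - k₂ + 1) / 2) j *
      (rising (k₁ + 1 / 2 + j) p * ((-1) ^ p * rising (1 / 2 + j) p)) /
      (2 ^ (k₁ + k₂) * j.factorial * (k₁ + j).factorial * (k₂ + j + p).factorial *
       (k₁ + k₂ + j + p).factorial * p.factorial) := by
    unfold rco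
    rw [← rising_fact k₁ j, ← rising_fact (k₂ + j) p, ← rising_fact k₂ j,
      ← rising_fact (k₁ + k₂ + j) p, ← rising_fact (k₁ + k₂) j, rising_add _ (k₁ + k₂ + 2 * j) p,
      rising_add _ (k₁ + k₂) (2 * j),
      show (1 / 2 : ℝ) + ((k₁ + k₂ + 2 * j : ℕ) : ℝ) = k₁ + k₂ + 1 / 2 + 2 * j by push_cast; ring,
      show (1 / 2 : ℝ) + ((k₁ + k₂ : ℕ) : ℝ) = k₁ + k₂ + 1 / 2 by push_cast; ring,
      show ((k₂ + j : ℕ) : ℝ) + 1 = k₂ + 1 + j by push_cast; ring,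
      show ((k₁ + k₂ + j : ℕ) : ℝ) + 1 = k₁ + k₂ + 1 + j by push_cast; ring,
      show ((k₁ + k₂ : ℕ) : ℝ) + 1 = k₁ + k₂ + 1 by push_cast; ring]
    have := fne (k₁ + k₂)
    have := fne k₁
    have := fne k₂
    have := fne j
    have := fne p
    have := (rising_pos (show (0 : ℝ) < k₁ + 1 by positivity) j).ne'
    have := (rising_pos (show (0 : ℝ) < k₂ + 1 by positivity) j).ne'
    have := (rising_pos (show (0 : ℝ) < k₁ + k₂ + 1 by positivity) j).ne'
    have := (rising_pos (show (0 : ℝ) < k₂ + 1 + j by positivity) p).ne'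
    have := (rising_pos (show (0 : ℝ) < k₁ + k₂ + 1 + j by positivity) p).ne'
    field_simp
  rw [hR, ← hs, Finset.mul_sum, Finset.sum_div]
  apply Finset.sum_congr rfl
  rintro ⟨r, l⟩ hx
  obtain rfl : r + l = p := by simpa using hx
  unfold Tco
  simp only
  have h1 := neg_rising (k₂ + j) (r + l) l (by omega)
  rw [show r + l - l = r by omega] at h1
  have h2 := rising_fact (k₁ + k₂ + j + r) l
  have h3 := rising_add (1 / 2) (k₁ + k₂ + 2 * j + (r + l)) r
  rw [show k₁ + k₂ + 2 * j + 2 * r + l = k₁ + k₂ + 2 * j + (r + l) + r by ring, h3,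
    show (1 / 2 : ℝ) + ((k₁ + k₂ + 2 * j + (r + l) : ℕ) : ℝ) = k₁ + k₂ + 2 * j + (r + l : ℕ) + 1 / 2 by
      push_cast; ring,
    Nat.cast_choose ℝ (show r ≤ r + l by omega), show r + l - r = l by omega,
    show (k₂ : ℝ) + 1 / 2 + (k₁ + k₂ + 2 * j + (r + l : ℕ) + 1 / 2) + -(((k₂ + j : ℕ) : ℝ) + (r + l : ℕ))
      + r = ((k₁ + k₂ + j + r : ℕ) : ℝ) + 1 by push_cast; ring,
    show k₁ + k₂ + j + (r + l) = k₁ + k₂ + j + r + l by ring, ← h2]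
  have hh := (rising_pos (show (0 : ℝ) < (k₁ + k₂ + j + r : ℕ) + 1 by positivity) l).ne'
  have := fne (k₁ + k₂ + j + r)
  have := fne (k₁ + j)
  have := fne (k₂ + j + r)
  have := fne (k₂ + j + (r + l))
  have := fne (r + l)
  have := fne j
  have := fne r
  have := fne l
  rw [eq_div_of_mul_eq (fne _) h1]
  field_simp

lemma coef_eq (k₁ k₂ n : ℕ) :
    ∑ x ∈ Finset.HasAntidiagonal.antidiagonal n, lco k₁ k₂ x.1 x.2 =
      ∑ x ∈ Finset.HasAntidiagonal.antidiagonal n, rco k₁ k₂ x.1 x.2 := by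
  simp only [lco_eq, rco_eq]
  rw [Finset.sum_sigma', Finset.sum_sigma']
  refine Finset.sum_nbij' (fun x => ⟨(x.2.1, x.2.2 + x.1.2), (x.2.2, x.1.2)⟩)
    (fun x => ⟨(x.1.1 + x.2.1, x.2.2), (x.1.1, x.2.1)⟩) ?_ ?_ ?_ ?_ ?_
  · rintro ⟨⟨a, b⟩, ⟨c, d⟩⟩ h
    simp at h ⊢; omega
  · rintro ⟨⟨a, b⟩, ⟨c, d⟩⟩ h
    simp at h ⊢; omega
  · rintro ⟨⟨a, b⟩, ⟨c, d⟩⟩ h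
    simp at h ⊢; omega
  · rintro ⟨⟨a, b⟩, ⟨c, d⟩⟩ h
    simp at h ⊢; omega
  · rintro ⟨⟨a, b⟩, ⟨c, d⟩⟩ h
    rfl

lemma hs_congr {f g : ℕ → ℝ} {a : ℝ} (h : HasSum f a) (e : ∀ n, g n = f n) : HasSum g a := by
  rwa [funext e]

lemma binom_hasSum (a w : ℝ) (hw : |w| < 1) :
    HasSum (fun n : ℕ => rising a n / n.factorial * w ^ n) ((1 - w) ^ (-a)) := by
  have h := (Real.one_div_one_sub_rpow_hasFPowerSeriesOnBall_zero a).hasSum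
    (y := w) (by simpa [enorm_eq_nnnorm, ← NNReal.coe_lt_coe] using hw)
  simp only [FormalMultilinearSeries.ofScalars_apply_eq, zero_add, smul_eq_mul] at h
  have h1 : 0 ≤ 1 - w := by have := abs_lt.1 hw; linarith
  rw [Real.rpow_neg h1, ← one_div]
  refine hs_congr h fun n => ?_
  have h2 : (n.factorial : ℝ) * Ring.choose (a + n - 1) n = rising a n := by
    have := Ring.factorial_nsmul_multichoose_eq_ascPochhammer a n
    rw [Polynomial.ascPochhammer_smeval_eq_eval, nsmul_eq_mul] at this
    rw [rising, ← this, Ring.choose]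
    congr 2
    ring
  rw [← h2]
  field_simp [fne n]

/-- iterated integral over the square -/
noncomputable def II (f : ℝ → ℝ → ℝ) : ℝ := ∫ s in (0:ℝ)..π, ∫ t in (0:ℝ)..π, f s t

lemma II_cont {f : ℝ → ℝ → ℝ} (hf : Continuous (Function.uncurry f)) :
    Continuous (fun s => ∫ t in (0:ℝ)..π, f s t) :=
  intervalIntegral.continuous_parametric_intervalIntegral_of_continuous' hf 0 π

lemma II_add {f g : ℝ → ℝ → ℝ} (hf : Continuous (Function.uncurry f))
    (hg : Continuous (Function.uncurry g)) :
    II (fun s t => f s t + g s t) = II f + II g := by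
  unfold II
  rw [← intervalIntegral.integral_add ((II_cont hf).intervalIntegrable _ _)
    ((II_cont hg).intervalIntegrable _ _)]
  congr 1
  ext s
  rw [intervalIntegral.integral_add]
  · exact (hf.comp (Continuous.prodMk_right s)).intervalIntegrable _ _
  · exact (hg.comp (Continuous.prodMk_right s)).intervalIntegrable _ _

lemma II_smul (c : ℝ) (f : ℝ → ℝ → ℝ) : II (fun s t => c * f s t) = c * II f := by
  unfold II
  simp only [intervalIntegral.integral_const_mul]

noncomputable def mom (m : ℕ) (p q : ℤ) : ℝ :=
  II (fun s t => Real.cos (p * s) * Real.cos (q * t) * (Real.cos s + Real.cos t) ^ m)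

lemma mom_cont (m : ℕ) (p q : ℤ) : Continuous (Function.uncurry
    (fun s t : ℝ => Real.cos (p * s) * Real.cos (q * t) * (Real.cos s + Real.cos t) ^ m)) := by
  unfold Function.uncurry
  fun_prop

lemma mom_succ (m : ℕ) (p q : ℤ) : mom (m + 1) p q =
    1 / 2 * (mom m (p + 1) q + mom m (p - 1) q + (mom m p (q + 1) + mom m p (q - 1))) := by
  unfold mom
  rw [← II_add (mom_cont m (p + 1) q) (mom_cont m (p - 1) q),
    ← II_add (mom_cont m p (q + 1)) (mom_cont m p (q - 1)), ← II_add, ← II_smul]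
  · congr 1
    ext s t
    have hs : Real.cos ((p + 1 : ℤ) * s) + Real.cos ((p - 1 : ℤ) * s)
        = 2 * Real.cos (p * s) * Real.cos s := by
      rw [show (((p + 1 : ℤ) : ℝ)) * s = p * s + s by push_cast; ring,
        show (((p - 1 : ℤ) : ℝ)) * s = p * s - s by push_cast; ring, Real.cos_add, Real.cos_sub]
      ring
    have ht : Real.cos ((q + 1 : ℤ) * t) + Real.cos ((q - 1 : ℤ) * t)
        = 2 * Real.cos (q * t) * Real.cos t := by
      rw [show (((q + 1 : ℤ) : ℝ)) * t = q * t + t by push_cast; ring,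
        show (((q - 1 : ℤ) : ℝ)) * t = q * t - t by push_cast; ring, Real.cos_add, Real.cos_sub]
      ring
    rw [pow_succ]
    linear_combination (-(1 / 2) * Real.cos (q * t) * (Real.cos s + Real.cos t) ^ m) * hs
      - ((1 / 2) * Real.cos (p * s) * (Real.cos s + Real.cos t) ^ m) * ht
  · exact (mom_cont m (p + 1) q).add (mom_cont m (p - 1) q)
  · exact (mom_cont m p (q + 1)).add (mom_cont m p (q - 1))

lemma int_cos (p : ℤ) : ∫ s in (0:ℝ)..π, Real.cos (p * s) = if p = 0 then π else 0 := by
  split_ifs with h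
  · simp [h]
  · have hp : (p : ℝ) ≠ 0 := by exact_mod_cast h
    rw [intervalIntegral.integral_comp_mul_left _ hp, integral_cos]
    simp [Real.sin_int_mul_pi]

/-- binomial walk numbers -/
def Bw : ℕ → ℤ → ℕ
  | 0, u => if u = 0 then 1 else 0
  | m + 1, u => Bw m (u + 1) + Bw m (u - 1)

lemma mom_eq (m : ℕ) : ∀ p q : ℤ, mom m p q = π ^ 2 * Bw m (p + q) * Bw m (p - q) / 2 ^ m := by
  induction m with
  | zero =>
    intro p q
    simp only [mom, II, pow_zero, mul_one, intervalIntegral.integral_const_mul,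
      intervalIntegral.integral_mul_const, int_cos, Bw, div_one]
    by_cases hp : p = 0
    · by_cases hq : q = 0
      · simp [hp, hq, sq]
      · simp [hp, hq]
    · by_cases hq : q = 0
      · simp [hp, hq]
      · have : ¬ (p + q = 0 ∧ p - q = 0) := by omega
        by_cases h1 : p + q = 0
        · have : p - q ≠ 0 := by omega
          simp [hp, hq, h1, this]
        · simp [hp, hq, h1]
  | succ m ih =>
    intro p q
    rw [mom_succ, ih, ih, ih, ih]
    simp only [Bw]
    rw [show p + 1 + q = p + q + 1 by ring, show p + 1 - q = p - q + 1 by ring,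
      show p - 1 + q = p + q - 1 by ring, show p - 1 - q = p - q - 1 by ring,
      show p + (q + 1) = p + q + 1 by ring, show p - (q + 1) = p - q - 1 by ring,
      show p + (q - 1) = p + q - 1 by ring, show p - (q - 1) = p - q + 1 by ring, pow_succ]
    push_cast
    field_simp
    ring

lemma Bw_big (m : ℕ) : ∀ u : ℤ, (m : ℤ) < u → Bw m u = 0 := by
  induction m with
  | zero => intro u hu; simp [Bw]; simp at hu; omega
  | succ m ih =>
    intro u hu
    push_cast at hu
    simp [Bw, ih (u + 1) (by omega), ih (u - 1) (by omega)]

lemma Bw_odd (m : ℕ) : ∀ u : ℤ, (m - u) % 2 = 1 → Bw m u = 0 := by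
  induction m with
  | zero => intro u hu; simp [Bw]; rintro rfl; simp at hu
  | succ m ih =>
    intro u hu
    push_cast at hu
    simp [Bw, ih (u + 1) (by omega), ih (u - 1) (by omega)]

lemma Bw_choose (m : ℕ) : ∀ i : ℕ, Bw m (m - 2 * i) = m.choose i := by
  induction m with
  | zero =>
    intro i
    cases i with
    | zero => simp [Bw]
    | succ i => simp [Bw]; omega
  | succ m ih =>
    intro i
    cases i with
    | zero =>
      have := ih 0
      simp at this
      simp [Bw, this, Bw_big m (m + 1 + 1) (by omega)]
    | succ i =>
      rw [Nat.choose_succ_succ, ← ih i, ← ih (i + 1), Bw]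
      push_cast
      congr 2 <;> ring

lemma Bw_le (m : ℕ) : ∀ u : ℤ, Bw m u ≤ 2 ^ m := by
  induction m with
  | zero => intro u; simp [Bw]; split_ifs <;> simp
  | succ m ih => intro u; have := ih (u + 1); have := ih (u - 1); simp only [Bw]; omega

lemma rising_half_le (m : ℕ) : rising (1 / 2) m ≤ m.factorial := by
  induction m with
  | zero => simp [rising_zero]
  | succ m ih =>
    rw [rising_succ, Nat.factorial_succ]
    push_cast
    have : 0 < rising (1 / 2) m := rising_pos (by norm_num) m
    nlinarith

noncomputable def aco (m : ℕ) : ℝ := rising (1 / 2) m / m.factorial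

lemma aco_nonneg (m : ℕ) : 0 ≤ aco m :=
  div_nonneg (rising_pos (by norm_num) m).le (by positivity)

lemma aco_le (m : ℕ) : aco m ≤ 1 := by
  unfold aco
  rw [div_le_one (by positivity)]
  exact rising_half_le m

/-- coefficient of the expansion in `y = x / (1 + x^2)`. -/
noncomputable def gco (k₁ k₂ m : ℕ) : ℝ :=
  aco m * (Bw m (k₁ + k₂) * Bw m (k₁ - k₂) / 2 ^ m)

lemma gco_nonneg (k₁ k₂ m : ℕ) : 0 ≤ gco k₁ k₂ m := by
  unfold gco
  have := aco_nonneg m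
  positivity

lemma gco_le (k₁ k₂ m : ℕ) : gco k₁ k₂ m ≤ 2 ^ m := by
  unfold gco
  have h1 : (Bw m (k₁ + k₂) : ℝ) ≤ 2 ^ m := by exact_mod_cast Bw_le m _
  have h2 : (Bw m (k₁ - k₂) : ℝ) ≤ 2 ^ m := by exact_mod_cast Bw_le m _
  have h3 : (Bw m (k₁ + k₂) * Bw m (k₁ - k₂) / 2 ^ m : ℝ) ≤ 2 ^ m := by
    rw [div_le_iff₀ (by positivity)]
    gcongr
  calc _ ≤ 1 * (2 : ℝ) ^ m := by
        gcongr
        exact aco_le m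
    _ = _ := one_mul _

lemma abs_integral_le {f : ℝ → ℝ} {C : ℝ} (hf : ∀ t, |f t| ≤ C) :
    |∫ t in (0:ℝ)..π, f t| ≤ C * π := by
  have := intervalIntegral.norm_integral_le_of_norm_le_const (a := 0) (b := π) (f := f) (C := C)
    (fun x _ => hf x)
  simpa [abs_of_pos Real.pi_pos] using this

lemma Xi2_hasSum (k₁ k₂ : ℕ) (x : ℝ) (hx : |x| < 1) :
    HasSum (fun m => π ^ 2 / 4 * (1 + x ^ 2) ^ (-(1 / 2) : ℝ) *
      (gco k₁ k₂ m * (x / (1 + x ^ 2)) ^ m)) (Xi2 k₁ k₂ x) := by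
  set y := x / (1 + x ^ 2) with hy
  have hpos : 0 < 1 + x ^ 2 := by positivity
  have hy2 : 2 * |y| < 1 := by
    rw [hy, abs_div, abs_of_pos hpos, ← mul_div_assoc, div_lt_one hpos]
    nlinarith [sq_abs x, abs_nonneg x]
  set F : ℕ → ℝ → ℝ → ℝ := fun m s t => aco m * y ^ m *
    (Real.cos ((k₁ : ℤ) * s) * Real.cos ((k₂ : ℤ) * t) * (Real.cos s + Real.cos t) ^ m) with hF
  have hFc : ∀ m, Continuous (Function.uncurry (F m)) := fun m => by
    have := mom_cont m k₁ k₂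
    exact continuous_const.mul this
  have hct : ∀ s t : ℝ, |Real.cos s + Real.cos t| ≤ 2 := fun s t => by
    have := abs_add_le (Real.cos s) (Real.cos t)
    have := Real.abs_cos_le_one s
    have := Real.abs_cos_le_one t
    linarith
  have hFb : ∀ m s t, |F m s t| ≤ (2 * |y|) ^ m := by
    intro m s t
    simp only [hF, abs_mul, abs_pow, abs_of_nonneg (aco_nonneg m)]
    have h1 := Real.abs_cos_le_one ((k₁ : ℤ) * s)
    have h2 := Real.abs_cos_le_one ((k₂ : ℤ) * t)
    have h3 := aco_le m
    have h0 := aco_nonneg m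
    have h4 : |Real.cos s + Real.cos t| ^ m ≤ 2 ^ m := pow_le_pow_left₀ (abs_nonneg _) (hct s t) m
    calc _ ≤ 1 * |y| ^ m * (1 * 1 * 2 ^ m) := by gcongr
      _ = _ := by rw [mul_pow]; ring
  have hsum : Summable (fun m : ℕ => (2 * |y|) ^ m) :=
    summable_geometric_of_lt_one (by positivity) hy2
  set f : ℝ → ℝ → ℝ := fun s t => Real.cos (k₁ * s) * Real.cos (k₂ * t) *
    (1 - y * (Real.cos s + Real.cos t)) ^ (-(1 / 2) : ℝ) with hf
  have hlim : ∀ s t, HasSum (fun m => F m s t) (f s t) := by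
    intro s t
    have hw : |y * (Real.cos s + Real.cos t)| < 1 := by
      rw [abs_mul]
      nlinarith [hct s t, abs_nonneg y]
    have := (binom_hasSum (1 / 2) _ hw).mul_left (Real.cos (k₁ * s) * Real.cos (k₂ * t))
    refine hs_congr this fun m => ?_
    simp only [hF, aco, mul_pow]
    push_cast
    ring
  have hin : ∀ s, HasSum (fun m => ∫ t in (0:ℝ)..π, F m s t) (∫ t in (0:ℝ)..π, f s t) := by
    intro s
    apply intervalIntegral.hasSum_integral_of_dominated_convergence (fun m _ => (2 * |y|) ^ m)
    · intro m
      exact ((hFc m).comp (Continuous.prodMk_right s)).aestronglyMeasurable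
    · intro m
      exact Filter.Eventually.of_forall fun t _ => hFb m s t
    · exact Filter.Eventually.of_forall fun t _ => hsum
    · exact intervalIntegrable_const
    · exact Filter.Eventually.of_forall fun t _ => hlim s t
  have hout : HasSum (fun m => II (F m)) (II f) := by
    apply intervalIntegral.hasSum_integral_of_dominated_convergence (fun m _ => (2 * |y|) ^ m * π)
    · intro m
      exact (II_cont (hFc m)).aestronglyMeasurable
    · intro m
      exact Filter.Eventually.of_forall fun s _ => abs_integral_le (hFb m s)
    · exact Filter.Eventually.of_forall fun t _ => hsum.mul_right π
    · exact intervalIntegrable_const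
    · exact Filter.Eventually.of_forall fun s _ => hin s
  have hXi : Xi2 k₁ k₂ x = 1 / 4 * (1 + x ^ 2) ^ (-(1 / 2) : ℝ) * II f := by
    rw [mul_assoc, ← II_smul]
    unfold Xi2 II
    congr 1
    congr 1
    ext s
    congr 1
    ext t
    have hq : 0 < 1 - y * (Real.cos s + Real.cos t) := by
      have h1 := hct s t
      have h2 : |y * (Real.cos s + Real.cos t)| < 1 := by
        rw [abs_mul]
        nlinarith [hct s t, abs_nonneg y]
      have := (abs_lt.1 h2).2
      linarith
    have : 1 + x ^ 2 - x * (Real.cos s + Real.cos t) =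
        (1 + x ^ 2) * (1 - y * (Real.cos s + Real.cos t)) := by
      rw [hy]; field_simp
    rw [this, Real.sqrt_eq_rpow, Real.mul_rpow hpos.le hq.le, hf]
    simp only
    rw [Real.rpow_neg hpos.le, Real.rpow_neg hq.le]
    field_simp
  rw [hXi]
  have := hout.mul_left (1 / 4 * (1 + x ^ 2) ^ (-(1 / 2) : ℝ))
  refine hs_congr this fun m => ?_
  have hII : II (F m) = aco m * y ^ m * mom m k₁ k₂ := by
    rw [hF, mom, ← II_smul]
  rw [hII, mom_eq, gco]
  ring

lemma ps_analytic (c : ℕ → ℝ) (r : ℝ)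
    (h : ∀ z : ℝ, |z| < r → Summable (fun n => c n * z ^ n)) (z : ℝ) (hz : |z| < r) :
    AnalyticAt ℝ (fun z => ∑' n, c n * z ^ n) z := by
  obtain ⟨w, hw1, hw2⟩ := exists_between hz
  have hw0 : 0 < w := lt_of_le_of_lt (abs_nonneg z) hw1
  set p := FormalMultilinearSeries.ofScalars ℝ c with hp
  have hr : (ENNReal.ofReal w) ≤ p.radius := by
    have := (h w (by rwa [abs_of_pos hw0])).tendsto_atTop_zero
    have h2 : Filter.Tendsto (fun n => ‖p n‖ * (w.toNNReal : ℝ) ^ n) Filter.atTop (nhds 0) := by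
      have h3 := this.norm
      rw [norm_zero] at h3
      refine h3.congr fun n => ?_
      rw [hp, FormalMultilinearSeries.ofScalars_norm, norm_mul, norm_pow,
        Real.coe_toNNReal _ hw0.le, Real.norm_of_nonneg hw0.le]
    exact p.le_radius_of_tendsto h2
  have hb := p.hasFPowerSeriesOnBall (lt_of_lt_of_le (ENNReal.ofReal_pos.2 hw0) hr)
  have hs : p.sum = fun z => ∑' n, c n * z ^ n := by
    ext z
    have := FormalMultilinearSeries.ofScalars_sum_eq (E := ℝ) c z
    simpa [FormalMultilinearSeries.ofScalarsSum, smul_eq_mul] using this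
  rw [← hs]
  apply hb.analyticAt_of_mem
  refine Metric.eball_subset_eball hr ?_
  rw [Metric.mem_eball, edist_dist, Real.dist_eq, sub_zero]
  exact (ENNReal.ofReal_lt_ofReal_iff hw0).2 hw1

lemma rpow_analytic (a x : ℝ) (hx : |x| < 1) :
    AnalyticAt ℝ (fun x : ℝ => (1 + x ^ 2) ^ a) x := by
  have h1 : AnalyticAt ℝ (fun y : ℝ => (1 + y) ^ a) (x ^ 2) := by
    apply (Real.one_add_rpow_hasFPowerSeriesOnBall_zero (a := a)).analyticAt_of_mem
    rw [Metric.mem_eball, edist_dist, Real.dist_eq, sub_zero]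
    rw [ENNReal.ofReal_lt_one, abs_pow]
    nlinarith [abs_nonneg x]
  exact AnalyticAt.fun_comp (f := fun x : ℝ => x ^ 2) (x := x) h1 (by fun_prop)

lemma y_lt (x : ℝ) (hx : |x| < 1) : |x / (1 + x ^ 2)| < 1 / 2 := by
  have hpos : 0 < 1 + x ^ 2 := by positivity
  rw [abs_div, abs_of_pos hpos, div_lt_iff₀ hpos, ← sq_abs]
  nlinarith [sq_nonneg (1 - |x|), mul_pos (sub_pos.2 hx) (sub_pos.2 hx)]

lemma gco_summable (k₁ k₂ : ℕ) (z : ℝ) (hz : |z| < 1 / 2) :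
    Summable (fun m => gco k₁ k₂ m * z ^ m) := by
  refine Summable.of_norm_bounded (g := fun m => (2 * |z|) ^ m)
    (summable_geometric_of_lt_one (by positivity) (by linarith)) fun m => ?_
  rw [norm_mul, norm_pow, mul_pow, Real.norm_of_nonneg (gco_nonneg _ _ _), Real.norm_eq_abs]
  exact mul_le_mul_of_nonneg_right (gco_le _ _ _) (by positivity)

lemma Xi2_analytic (k₁ k₂ : ℕ) : AnalyticOnNhd ℝ (Xi2 k₁ k₂) (Set.Ioo (-1) 1) := by
  intro x hx
  have hx' : |x| < 1 := abs_lt.2 hx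
  have key : AnalyticAt ℝ (fun x : ℝ => π ^ 2 / 4 * (1 + x ^ 2) ^ (-(1 / 2) : ℝ) *
      ∑' m, gco k₁ k₂ m * (x / (1 + x ^ 2)) ^ m) x := by
    refine (analyticAt_const.mul (rpow_analytic _ x hx')).mul ?_
    have h1 := ps_analytic (gco k₁ k₂) (1 / 2) (gco_summable k₁ k₂) _ (y_lt x hx')
    refine AnalyticAt.fun_comp (f := fun x : ℝ => x / (1 + x ^ 2)) (x := x) h1 ?_
    refine analyticAt_id.div (by fun_prop) (by positivity)
  refine key.congr ?_
  filter_upwards [isOpen_Ioo.mem_nhds hx] with y hy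
  have := (Xi2_hasSum k₁ k₂ y (abs_lt.2 hy)).tsum_eq
  rw [tsum_mul_left] at this
  exact this

lemma ratio_lim (a b : ℝ) :
    Filter.Tendsto (fun n : ℕ => (a + n) / (b + n)) Filter.atTop (nhds 1) := by
  have := tendsto_add_mul_div_add_mul_atTop_nhds (𝕜 := ℝ) a b 1 (d := 1) one_ne_zero
  simpa using this

lemma clausen_summable (a₁ a₂ a₃ b₁ b₂ : ℝ) (h1 : 0 < a₁) (h2 : 0 < a₂) (h3 : 0 < a₃)
    (h4 : 0 < b₁) (h5 : 0 < b₂) (z : ℝ) (hz : |z| < 1) :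
    Summable (fun n : ℕ => rising a₁ n * rising a₂ n * rising a₃ n /
    (rising b₁ n * rising b₂ n * n.factorial) * z ^ n) := by
  by_cases h0 : z = 0
  · apply summable_of_ne_finset_zero (s := {0})
    intro n hn
    have : n ≠ 0 := by simpa using hn
    simp [h0, this]
  have hp : ∀ n, 0 < rising a₁ n * rising a₂ n * rising a₃ n /
    (rising b₁ n * rising b₂ n * n.factorial) := fun n => by
    have := rising_pos h1 n
    have := rising_pos h2 n
    have := rising_pos h3 n
    have := rising_pos h4 n
    have := rising_pos h5 n
    positivity
  apply summable_of_ratio_test_tendsto_lt_one hz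
  · exact Filter.Eventually.of_forall fun n => mul_ne_zero (hp n).ne' (pow_ne_zero _ h0)
  · have := (((ratio_lim a₁ b₁).mul (ratio_lim a₂ b₂)).mul (ratio_lim a₃ 1)).mul_const |z|
    simp only [mul_one, one_mul] at this
    refine this.congr fun n => ?_
    rw [norm_mul, norm_mul, Real.norm_of_nonneg (hp n).le, Real.norm_of_nonneg (hp (n + 1)).le,
      norm_pow, norm_pow, Real.norm_eq_abs]
    simp only [rising_succ, Nat.factorial_succ, pow_succ]
    have := rising_pos h1 n
    have := rising_pos h2 n
    have := rising_pos h3 n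
    have := rising_pos h4 n
    have := rising_pos h5 n
    have := abs_pos.2 h0
    push_cast
    field_simp
    ring

lemma clausen_analytic (a₁ a₂ a₃ b₁ b₂ : ℝ) (h1 : 0 < a₁) (h2 : 0 < a₂) (h3 : 0 < a₃)
    (h4 : 0 < b₁) (h5 : 0 < b₂) (x : ℝ) (hx : |x| < 1) :
    AnalyticAt ℝ (fun x : ℝ => clausen3F2 a₁ a₂ a₃ b₁ b₂ (-x ^ 2)) x := by
  have hz : |-x ^ 2| < 1 := by
    rw [abs_neg, abs_pow]
    nlinarith [abs_nonneg x]
  have := ps_analytic _ 1 (clausen_summable a₁ a₂ a₃ b₁ b₂ h1 h2 h3 h4 h5) _ hz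
  exact AnalyticAt.fun_comp (f := fun x : ℝ => -x ^ 2) (x := x) this (by fun_prop)

/-- The right-hand side. -/
noncomputable def RR (k₁ k₂ : ℕ) (x : ℝ) : ℝ :=
      π ^ 2 * rising (1 / 2) (k₁ + k₂) * (2 * x) ^ (k₁ + k₂) /
          (4 ^ (k₁ + k₂ + 1) * (k₁.factorial : ℝ) * (k₂.factorial : ℝ)) *
        ∑ j ∈ Finset.range ((k₂ - k₁) / 2 + 1),
          rising (((k₁ : ℝ) - k₂) / 2) j * rising (((k₁ : ℝ) - k₂ + 1) / 2) j *
              rising ((k₁ : ℝ) + k₂ + 1 / 2) (2 * j) * x ^ (2 * j) /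
            (rising ((k₁ : ℝ) + 1) j * rising ((k₂ : ℝ) + 1) j *
              rising ((k₁ : ℝ) + k₂ + 1) j * (j.factorial : ℝ)) *
          clausen3F2 (1 / 2 + j) (k₁ + 1 / 2 + j) (k₁ + k₂ + 1 / 2 + 2 * j)
            (k₂ + 1 + j) (k₁ + k₂ + 1 + j) (-x ^ 2)

lemma RR_analytic (k₁ k₂ : ℕ) : AnalyticOnNhd ℝ (RR k₁ k₂) (Set.Ioo (-1) 1) := by
  intro x hx
  have hx' : |x| < 1 := abs_lt.2 hx
  unfold RR
  refine AnalyticAt.mul (by fun_prop) ?_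
  refine Finset.analyticAt_fun_sum _ fun j _ => ?_
  refine AnalyticAt.mul ?_ (clausen_analytic _ _ _ _ _ (by positivity) (by positivity)
    (by positivity) (by positivity) (by positivity) x hx')
  simp only [div_eq_mul_inv]
  fun_prop


lemma rpow_half (u : ℝ) (hu : 0 < u) (m : ℕ) :
    u ^ (-((m : ℝ) + 1 / 2)) = (u ^ m)⁻¹ * u ^ (-(1 / 2) : ℝ) := by
  rw [neg_add, Real.rpow_add hu, Real.rpow_neg hu.le, Real.rpow_natCast]

lemma lco_gco (k₁ k₂ i l : ℕ) : lco k₁ k₂ i l = gco k₁ k₂ (k₁ + k₂ + 2 * i) *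
    (rising (((k₁ + k₂ + 2 * i : ℕ) : ℝ) + 1 / 2) l / l.factorial * (-1) ^ l) := by
  have h1 : Bw (k₁ + k₂ + 2 * i) ((k₁ : ℤ) + k₂) = (k₁ + k₂ + 2 * i).choose i := by
    rw [← Bw_choose]; congr 1; push_cast; ring
  have h2 : Bw (k₁ + k₂ + 2 * i) ((k₁ : ℤ) - k₂) = (k₁ + k₂ + 2 * i).choose (k₂ + i) := by
    rw [← Bw_choose]; congr 1; push_cast; ring
  rw [gco, h1, h2, lco, aco]
  ring

lemma gco_zero (k₁ k₂ m : ℕ) (h : ∀ i, m ≠ k₁ + k₂ + 2 * i) : gco k₁ k₂ m = 0 := by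
  have : Bw m ((k₁ : ℤ) + k₂) = 0 := by
    by_cases h1 : m < k₁ + k₂
    · apply Bw_big; omega
    · apply Bw_odd
      have := h ((m - (k₁ + k₂)) / 2)
      omega
  rw [gco, this]
  simp

lemma Xi2_series (k₁ k₂ : ℕ) (hk : k₁ ≤ k₂) (x : ℝ) (hx : |x| < 1 / 8) :
    HasSum (fun n => π ^ 2 / 4 * x ^ (k₁ + k₂) *
      ((∑ q ∈ Finset.HasAntidiagonal.antidiagonal n, lco k₁ k₂ q.1 q.2) * (x ^ 2) ^ n))
      (Xi2 k₁ k₂ x) := by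
  have hx2 : x ^ 2 < 1 / 64 := by
    rw [← sq_abs]; nlinarith [abs_nonneg x]
  have hx2' : 0 ≤ x ^ 2 := sq_nonneg x
  set K := k₁ + k₂ with hK
  set t : ℕ × ℕ → ℝ := fun q => lco k₁ k₂ q.1 q.2 * (x ^ 2) ^ (q.1 + q.2) with ht
  set S : ℕ → ℝ := fun i => gco k₁ k₂ (K + 2 * i) * (x ^ 2) ^ i *
    (1 + x ^ 2) ^ (-(((K + 2 * i : ℕ) : ℝ) + 1 / 2)) with hS
  have hrow : ∀ i, HasSum (fun l => t (i, l)) (S i) := by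
    intro i
    have := (binom_hasSum (((K + 2 * i : ℕ) : ℝ) + 1 / 2) (-x ^ 2)
      (by rw [abs_neg, abs_of_nonneg hx2']; linarith)).mul_left
      (gco k₁ k₂ (K + 2 * i) * (x ^ 2) ^ i)
    rw [sub_neg_eq_add] at this
    refine hs_congr this fun l => ?_
    simp only [ht]
    rw [lco_gco, neg_pow, pow_add]
    ring
  have hrow' : ∀ i, HasSum (fun l => ‖t (i, l)‖) (gco k₁ k₂ (K + 2 * i) * (x ^ 2) ^ i *
    (1 - x ^ 2) ^ (-(((K + 2 * i : ℕ) : ℝ) + 1 / 2))) := by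
    intro i
    have := (binom_hasSum (((K + 2 * i : ℕ) : ℝ) + 1 / 2) (x ^ 2)
      (by rw [abs_of_nonneg hx2']; linarith)).mul_left
      (gco k₁ k₂ (K + 2 * i) * (x ^ 2) ^ i)
    refine hs_congr this fun l => ?_
    simp only [ht]
    have hr := rising_pos (a := ((K + 2 * i : ℕ) : ℝ) + 1 / 2) (by positivity) l
    rw [lco_gco, norm_mul, norm_mul, norm_mul, norm_pow, norm_neg, norm_one, one_pow,
      mul_one, Real.norm_of_nonneg (gco_nonneg _ _ _), Real.norm_of_nonneg (by positivity),
      Real.norm_of_nonneg (by positivity), pow_add]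
    ring
  have hsum : Summable t := by
    apply Summable.of_norm
    rw [summable_prod_of_nonneg (fun _ => norm_nonneg _)]
    refine ⟨fun i => (hrow' i).summable, ?_⟩
    have hu : 0 < 1 - x ^ 2 := by linarith
    have e : (fun i => ∑' l, ‖t (i, l)‖) = fun i => gco k₁ k₂ (K + 2 * i) * (x ^ 2) ^ i *
      (1 - x ^ 2) ^ (-(((K + 2 * i : ℕ) : ℝ) + 1 / 2)) := funext fun i => (hrow' i).tsum_eq
    rw [e]
    have hq : 4 * x ^ 2 / (1 - x ^ 2) ^ 2 < 1 := by
      rw [div_lt_one (by positivity)]; nlinarith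
    refine Summable.of_norm_bounded
      (g := fun i => (2 ^ K * ((1 - x ^ 2) ^ K)⁻¹ * (1 - x ^ 2) ^ (-(1 / 2) : ℝ)) *
        (4 * x ^ 2 / (1 - x ^ 2) ^ 2) ^ i)
      ((summable_geometric_of_lt_one (by positivity) hq).mul_left _) fun i => ?_
    have hr := Real.rpow_pos_of_pos hu (-(1 / 2) : ℝ)
    rw [rpow_half _ hu]
    have h1 := gco_nonneg k₁ k₂ (K + 2 * i)
    have h2 := gco_le k₁ k₂ (K + 2 * i)
    rw [Real.norm_of_nonneg (by positivity)]
    calc _ ≤ 2 ^ (K + 2 * i) * (x ^ 2) ^ i * (((1 - x ^ 2) ^ (K + 2 * i))⁻¹ *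
          (1 - x ^ 2) ^ (-(1 / 2) : ℝ)) := by gcongr
      _ = _ := by
        rw [div_pow, mul_pow, pow_add 2 K (2 * i), pow_add _ K (2 * i), pow_mul 2 2 i,
          pow_mul (1 - x ^ 2) 2 i]
        norm_num
        field_simp
  have hT := hsum.hasSum
  have hST := hT.prod_fiberwise hrow
  have hXi : HasSum (fun i => π ^ 2 / 4 * x ^ K * S i) (Xi2 k₁ k₂ x) := by
    have h0 := Xi2_hasSum k₁ k₂ x (by linarith)
    have hinj : Function.Injective (fun i : ℕ => K + 2 * i) := fun a b h => by
      simp only at h; omega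
    rw [← hinj.hasSum_iff] at h0
    · refine hs_congr h0 fun i => ?_
      have hp : 0 < 1 + x ^ 2 := by positivity
      simp only [Function.comp, hS]
      rw [rpow_half _ hp, div_pow, pow_add x K (2 * i), pow_mul x 2 i]
      ring
    · intro m hm
      rw [gco_zero k₁ k₂ m]
      · simp
      · intro i hi
        exact hm ⟨i, hi.symm⟩
  have hTX : π ^ 2 / 4 * x ^ K * (∑' q, t q) = Xi2 k₁ k₂ x :=
    (hST.mul_left _).unique hXi
  rw [← hTX]
  have h5 := (Finset.HasAntidiagonal.sigmaAntidiagonalEquivProd (A := ℕ)).hasSum_iff.2 hT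
  have h6 := h5.sigma (fun n => hasSum_fintype _)
  refine HasSum.mul_left _ (hs_congr h6 fun n => ?_)
  rw [Finset.sum_mul]
  simp only [Function.comp]
  rw [← Finset.sum_coe_sort (Finset.HasAntidiagonal.antidiagonal n)]
  refine Finset.sum_congr rfl fun q _ => ?_
  have := Finset.HasAntidiagonal.mem_antidiagonal.1 q.2
  simp only [ht, Finset.HasAntidiagonal.sigmaAntidiagonalEquivProd, Equiv.coe_fn_mk]
  rw [this]

lemma rising_neg_zero (d j : ℕ) (h : d < j) : rising (-(d : ℝ)) j = 0 :=
  ascPochhammer_eval_neg_coe_nat_of_lt h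

lemma rco_zero (k₁ k₂ j p : ℕ) (hk : k₁ ≤ k₂) (hj : (k₂ - k₁) / 2 < j) : rco k₁ k₂ j p = 0 := by
  obtain ⟨d, rfl⟩ := Nat.exists_eq_add_of_le hk
  have hd : k₁ + d - k₁ = d := by omega
  rw [hd] at hj
  rcases Nat.even_or_odd' d with ⟨c, rfl | rfl⟩
  · have e : ((k₁ : ℝ) - (k₁ + 2 * c : ℕ)) / 2 = -(c : ℝ) := by push_cast; ring
    rw [rco, e, rising_neg_zero c j (by omega)]
    simp
  · have e : ((k₁ : ℝ) - (k₁ + (2 * c + 1) : ℕ) + 1) / 2 = -(c : ℝ) := by push_cast; ring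
    rw [rco, e, rising_neg_zero c j (by omega)]
    simp

lemma RR_series (k₁ k₂ : ℕ) (hk : k₁ ≤ k₂) (x : ℝ) (hx : |x| < 1) :
    HasSum (fun n => π ^ 2 / 4 * x ^ (k₁ + k₂) *
      ((∑ q ∈ Finset.HasAntidiagonal.antidiagonal n, rco k₁ k₂ q.1 q.2) * (x ^ 2) ^ n))
      (RR k₁ k₂ x) := by
  have hz : |-x ^ 2| < 1 := by
    rw [abs_neg, abs_pow]
    nlinarith [abs_nonneg x]
  set C : ℝ := π ^ 2 * rising (1 / 2) (k₁ + k₂) * (2 * x) ^ (k₁ + k₂) /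
          (4 ^ (k₁ + k₂ + 1) * (k₁.factorial : ℝ) * (k₂.factorial : ℝ)) with hC
  set D : ℕ → ℝ := fun j => rising (((k₁ : ℝ) - k₂) / 2) j * rising (((k₁ : ℝ) - k₂ + 1) / 2) j *
              rising ((k₁ : ℝ) + k₂ + 1 / 2) (2 * j) * x ^ (2 * j) /
            (rising ((k₁ : ℝ) + 1) j * rising ((k₂ : ℝ) + 1) j *
              rising ((k₁ : ℝ) + k₂ + 1) j * (j.factorial : ℝ)) with hD
  have hC2 : C = π ^ 2 / 4 * x ^ (k₁ + k₂) *
      (rising (1 / 2) (k₁ + k₂) / (2 ^ (k₁ + k₂) * k₁.factorial * k₂.factorial)) := by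
    have e4 : (4 : ℝ) ^ (k₁ + k₂ + 1) = 2 ^ (k₁ + k₂) * 2 ^ (k₁ + k₂) * 4 := by
      rw [pow_succ, ← mul_pow]; norm_num
    have e2 : (2 : ℝ) ^ (k₁ + k₂) ≠ 0 := by positivity
    have e1 := fne k₁
    have e3 := fne k₂
    rw [hC, e4, mul_pow]
    generalize (2 : ℝ) ^ (k₁ + k₂) = w at *
    field_simp
  have hj : ∀ j ∈ Finset.range ((k₂ - k₁) / 2 + 1),
      HasSum (fun n => if j ≤ n then π ^ 2 / 4 * x ^ (k₁ + k₂) *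
        (rco k₁ k₂ j (n - j) * (x ^ 2) ^ n) else 0)
      (C * (D j * clausen3F2 (1 / 2 + j) (k₁ + 1 / 2 + j) (k₁ + k₂ + 1 / 2 + 2 * j)
            (k₂ + 1 + j) (k₁ + k₂ + 1 + j) (-x ^ 2))) := by
    intro j _
    have h0 := ((clausen_summable (1 / 2 + j) (k₁ + 1 / 2 + j) (k₁ + k₂ + 1 / 2 + 2 * j)
            (k₂ + 1 + j) (k₁ + k₂ + 1 + j) (by positivity) (by positivity)
      (by positivity) (by positivity) (by positivity) _ hz).hasSum.mul_left (D j)).mul_left C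
    have hinj : Function.Injective (fun p : ℕ => j + p) := fun a b h => by
      simp only at h; omega
    have h1 := hinj.hasSum_iff (f := fun n => if j ≤ n then π ^ 2 / 4 * x ^ (k₁ + k₂) *
        (rco k₁ k₂ j (n - j) * (x ^ 2) ^ n) else 0)
        (a := C * (D j * clausen3F2 (1 / 2 + j) (k₁ + 1 / 2 + j) (k₁ + k₂ + 1 / 2 + 2 * j)
            (k₂ + 1 + j) (k₁ + k₂ + 1 + j) (-x ^ 2))) (by
        intro n hn
        rw [if_neg]
        intro h
        exact hn ⟨n - j, by simp only; omega⟩)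
    rw [← h1]
    refine hs_congr h0 fun p => ?_
    simp only [Function.comp, le_add_iff_nonneg_right, zero_le, if_true, add_tsub_cancel_left]
    rw [hC2, rco]
    simp only [hD]
    rw [neg_pow (x ^ 2), pow_add (x ^ 2) j p, pow_mul x 2 j]
    ring
  have hs := hasSum_sum hj
  have hR : RR k₁ k₂ x = ∑ j ∈ Finset.range ((k₂ - k₁) / 2 + 1),
     (C * (D j * clausen3F2 (1 / 2 + j) (k₁ + 1 / 2 + j) (k₁ + k₂ + 1 / 2 + 2 * j)
            (k₂ + 1 + j) (k₁ + k₂ + 1 + j) (-x ^ 2))) := by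
    rw [← Finset.mul_sum, hC]; rfl
  rw [hR]
  refine hs_congr hs fun n => ?_
  rw [Finset.Nat.sum_antidiagonal_eq_sum_range_succ_mk, Finset.sum_mul, Finset.mul_sum,
    ← Finset.sum_filter]
  symm
  apply Finset.sum_subset_zero_on_sdiff
  · intro j hj
    simp only [Finset.mem_filter, Finset.mem_range] at hj ⊢
    omega
  · intro j hj
    simp only [Finset.mem_sdiff, Finset.mem_filter, Finset.mem_range] at hj
    rw [rco_zero k₁ k₂ j _ hk (by omega)]
    simp
  · intro j _
    rfl

lemma Xi2_eq_RR (k₁ k₂ : ℕ) (hk : k₁ ≤ k₂) : Set.EqOn (Xi2 k₁ k₂) (RR k₁ k₂) (Set.Ioo (-1) 1) := by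
  refine (Xi2_analytic k₁ k₂).eqOn_of_preconnected_of_eventuallyEq (RR_analytic k₁ k₂)
    isPreconnected_Ioo (z₀ := 0) (by norm_num) ?_
  filter_upwards [isOpen_Ioo.mem_nhds (show (0 : ℝ) ∈ Set.Ioo (-(1 / 8)) (1 / 8) by norm_num)]
    with x hx
  have hx' : |x| < 1 / 8 := abs_lt.2 hx
  refine (hs_congr (Xi2_series k₁ k₂ hk x hx') fun n => ?_).unique
    (RR_series k₁ k₂ hk x (by linarith))
  rw [coef_eq]


theorem Xi2_representation (k₁ k₂ : ℕ) (hk : k₁ ≤ k₂)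
    (x : ℝ) (hx0 : 0 ≤ x) (hx1 : x < 1) :
    Xi2 k₁ k₂ x =
      π ^ 2 * rising (1 / 2) (k₁ + k₂) * (2 * x) ^ (k₁ + k₂) /
          (4 ^ (k₁ + k₂ + 1) * (k₁.factorial : ℝ) * (k₂.factorial : ℝ)) *
        ∑ j ∈ Finset.range ((k₂ - k₁) / 2 + 1),
          rising (((k₁ : ℝ) - k₂) / 2) j * rising (((k₁ : ℝ) - k₂ + 1) / 2) j *
              rising ((k₁ : ℝ) + k₂ + 1 / 2) (2 * j) * x ^ (2 * j) /
            (rising ((k₁ : ℝ) + 1) j * rising ((k₂ : ℝ) + 1) j *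
              rising ((k₁ : ℝ) + k₂ + 1) j * (j.factorial : ℝ)) *
          clausen3F2 (1 / 2 + j) (k₁ + 1 / 2 + j) (k₁ + k₂ + 1 / 2 + 2 * j)
            (k₂ + 1 + j) (k₁ + k₂ + 1 + j) (-x ^ 2) := by
  exact Xi2_eq_RR k₁ k₂ hk ⟨by linarith, hx1⟩
end

section
/- The function h(x) = Ξ₂^{[0,0]}(x) = (1/4)∫₀^π∫₀^π dθ₁dθ₂/√(1+x²−x(cos θ₁+cos θ₂)) satisfies on (0,1) the third-order ODE x³(1+x²) h'''(x) + 3x²(2x²+1) h''(x) + x(7x²+1) h'(x) + x² h(x) = 0. -/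
open Real

/-- The lowest-mode rank-2 Melnikov function Ξ₂^{[0,0]}. -/
noncomputable def Xi200 (x : ℝ) : ℝ :=
  (1 / 4) * ∫ θ₁ in (0:ℝ)..π, ∫ θ₂ in (0:ℝ)..π,
    (1 : ℝ) / Real.sqrt (1 + x ^ 2 - x * (Real.cos θ₁ + Real.cos θ₂))

namespace XiAux

open Real Set MeasureTheory Filter Topology

/-- The radicand. -/
noncomputable def R (x a b : ℝ) : ℝ := 1 + x ^ 2 - x * (Real.cos a + Real.cos b)

/-- The integrand. -/
noncomputable def w (x a b : ℝ) : ℝ := 1 / Real.sqrt (R x a b)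

lemma R_pos {x : ℝ} (hx : x ∈ Ioo (0:ℝ) 1) (a b : ℝ) : 0 < R x a b := by
  unfold R
  have h1 := Real.cos_le_one a
  have h2 := Real.cos_le_one b
  obtain ⟨h0, h3⟩ := hx
  nlinarith [mul_nonneg h0.le (sub_nonneg.2 h1), mul_nonneg h0.le (sub_nonneg.2 h2),
    mul_pos (sub_pos.2 h3) (sub_pos.2 h3)]

lemma R_mul_w_sq {x : ℝ} (hx : x ∈ Ioo (0:ℝ) 1) (a b : ℝ) : R x a b * w x a b ^ 2 = 1 := by
  have h := R_pos hx a b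
  unfold w
  rw [div_pow, Real.sq_sqrt h.le]
  field_simp

lemma hasDerivAt_w {r : ℝ → ℝ} {r' t : ℝ} (hr : HasDerivAt r r' t) (h : 0 < r t) :
    HasDerivAt (fun s => 1 / Real.sqrt (r s)) (-(1 / 2) * r' * (1 / Real.sqrt (r t)) ^ 3) t := by
  have hs : 0 < Real.sqrt (r t) := Real.sqrt_pos.2 h
  have := (hr.sqrt h.ne').inv hs.ne'
  simp only [one_div]
  refine HasDerivAt.congr_deriv this ?_
  field_simp

lemma w_dx {x : ℝ} (hx : x ∈ Ioo (0:ℝ) 1) (a b : ℝ) :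
    HasDerivAt (fun x => w x a b)
      (-(1 / 2) * (2 * x - (Real.cos a + Real.cos b)) * w x a b ^ 3) x := by
  refine hasDerivAt_w (r := fun x => R x a b) ?_ (R_pos hx a b)
  unfold R
  have := ((hasDerivAt_pow 2 x).const_add 1).sub
    ((hasDerivAt_id x).mul_const (Real.cos a + Real.cos b))
  refine HasDerivAt.congr_deriv this ?_
  simp

lemma w_da {x : ℝ} (hx : x ∈ Ioo (0:ℝ) 1) (a b : ℝ) :
    HasDerivAt (fun a => w x a b) (-(1 / 2) * (x * Real.sin a) * w x a b ^ 3) a := by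
  refine hasDerivAt_w (r := fun a => R x a b) ?_ (R_pos hx a b)
  unfold R
  have := (((Real.hasDerivAt_cos a).add_const (Real.cos b)).const_mul x).const_sub (1 + x ^ 2)
  refine HasDerivAt.congr_deriv this ?_
  ring

lemma w_cont (q : ℝ × ℝ × ℝ) (hq : q.1 ∈ Ioo (0:ℝ) 1) :
    ContinuousAt (fun q : ℝ × ℝ × ℝ => w q.1 q.2.1 q.2.2) q := by
  unfold w
  have h := R_pos hq q.2.1 q.2.2
  refine ContinuousAt.div continuousAt_const ?_ (Real.sqrt_pos.2 h).ne'
  unfold R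
  fun_prop

/-- Continuity on the strip. -/
def Good (G : ℝ → ℝ → ℝ → ℝ) : Prop :=
  ∀ q : ℝ × ℝ × ℝ, q.1 ∈ Ioo (0:ℝ) 1 → ContinuousAt (fun q : ℝ × ℝ × ℝ => G q.1 q.2.1 q.2.2) q

/-- The square. -/
def S : Set (ℝ × ℝ) := Ioc 0 π ×ˢ Ioc 0 π

/-- Integral over the square. -/
noncomputable def J (G : ℝ → ℝ → ℝ → ℝ) (x : ℝ) : ℝ := ∫ p in S, G x p.1 p.2

lemma Good.cont {G : ℝ → ℝ → ℝ → ℝ} (hG : Good G) {x : ℝ} (hx : x ∈ Ioo (0:ℝ) 1) :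
    Continuous (fun p : ℝ × ℝ => G x p.1 p.2) := by
  rw [continuous_iff_continuousAt]
  intro p
  exact ContinuousAt.comp (f := fun p : ℝ × ℝ => (x, p)) (hG (x, p) hx) (by fun_prop)

lemma integrable_S {g : ℝ × ℝ → ℝ} (hg : Continuous g) : IntegrableOn g S := by
  have : IntegrableOn g (Icc 0 π ×ˢ Icc 0 π) :=
    hg.continuousOn.integrableOn_compact (isCompact_Icc.prod isCompact_Icc)
  exact this.mono_set (prod_mono Ioc_subset_Icc_self Ioc_subset_Icc_self)

lemma S_meas : MeasurableSet S := measurableSet_Ioc.prod measurableSet_Ioc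

lemma int_eq {g : ℝ × ℝ → ℝ} (hg : Continuous g) :
    ∫ p in S, g p = ∫ a in (0:ℝ)..π, ∫ b in (0:ℝ)..π, g (a, b) := by
  have h := integrable_S hg
  unfold S at *
  rw [Measure.volume_eq_prod] at *
  rw [setIntegral_prod g h]
  simp only [intervalIntegral.integral_of_le Real.pi_pos.le]

lemma int_eq' {g : ℝ × ℝ → ℝ} (hg : Continuous g) :
    ∫ p in S, g p = ∫ b in (0:ℝ)..π, ∫ a in (0:ℝ)..π, g (a, b) := by
  have h := integrable_S hg
  have h2 := int_eq (g := fun p => g p.swap) (by fun_prop)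
  simp only [Prod.swap_prod_mk] at h2
  rw [← h2]
  unfold S
  rw [Measure.volume_eq_prod, ← Measure.prod_restrict]
  exact (integral_prod_swap g).symm

lemma J_deriv {G G' : ℝ → ℝ → ℝ → ℝ} (hG : Good G) (hG' : Good G')
    (hd : ∀ x ∈ Ioo (0:ℝ) 1, ∀ a b, HasDerivAt (fun x => G x a b) (G' x a b) x)
    {x : ℝ} (hx : x ∈ Ioo (0:ℝ) 1) : HasDerivAt (J G) (J G' x) x := by
  obtain ⟨ε, hε, hsub⟩ := Metric.nhds_basis_closedBall.mem_iff.1 (isOpen_Ioo.mem_nhds hx)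
  have hK : IsCompact (Metric.closedBall x ε ×ˢ (Icc (0:ℝ) π ×ˢ Icc (0:ℝ) π)) :=
    (isCompact_closedBall x ε).prod (isCompact_Icc.prod isCompact_Icc)
  obtain ⟨C, hC⟩ := hK.exists_bound_of_continuousOn
    (f := fun q : ℝ × ℝ × ℝ => G' q.1 q.2.1 q.2.2)
    (fun q hq => (hG' q (hsub hq.1)).continuousWithinAt)
  have hfin : IsFiniteMeasure (volume.restrict S) := by
    refine ⟨?_⟩
    have hc : IsCompact (Icc (0:ℝ) π ×ˢ Icc (0:ℝ) π) := isCompact_Icc.prod isCompact_Icc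
    rw [Measure.restrict_apply_univ]
    exact (measure_mono (Set.prod_mono Ioc_subset_Icc_self Ioc_subset_Icc_self)).trans_lt
      hc.measure_lt_top
  refine (hasDerivAt_integral_of_dominated_loc_of_deriv_le
    (F := fun x (p : ℝ × ℝ) => G x p.1 p.2) (F' := fun x (p : ℝ × ℝ) => G' x p.1 p.2)
    (bound := fun _ => C) (Metric.closedBall_mem_nhds x hε) ?_ ?_ ?_ ?_ ?_ ?_).2
  · filter_upwards [isOpen_Ioo.mem_nhds hx] with y hy
    exact (hG.cont hy).aestronglyMeasurable
  · exact integrable_S (hG.cont hx)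
  · exact (hG'.cont hx).aestronglyMeasurable
  · filter_upwards [ae_restrict_mem S_meas] with p hp y hy
    exact hC (y, p) ⟨hy, Ioc_subset_Icc_self hp.1, Ioc_subset_Icc_self hp.2⟩
  · exact integrable_const C
  · exact Eventually.of_forall fun p y hy => hd y (hsub hy) _ _

/-- First derivative of the integrand. -/
noncomputable def w1 (x a b : ℝ) : ℝ :=
  -(1 / 2) * (2 * x - (Real.cos a + Real.cos b)) * w x a b ^ 3

/-- Second derivative of the integrand. -/
noncomputable def w2 (x a b : ℝ) : ℝ :=
  3 / 4 * (2 * x - (Real.cos a + Real.cos b)) ^ 2 * w x a b ^ 5 - w x a b ^ 3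

/-- Third derivative of the integrand. -/
noncomputable def w3 (x a b : ℝ) : ℝ :=
  -(15 / 8) * (2 * x - (Real.cos a + Real.cos b)) ^ 3 * w x a b ^ 7
    + 9 / 2 * (2 * x - (Real.cos a + Real.cos b)) * w x a b ^ 5

/-- Derivative in the first angle of the telescoping certificate. -/
noncomputable def P' (x a b : ℝ) : ℝ :=
  (1 - x ^ 2) * ((Real.cos a * (x * (1 + x ^ 2) / 2 + x ^ 2 * (7 * Real.cos b + Real.cos a) / 4)
    - x ^ 2 / 4 * Real.sin a ^ 2) * w x a b ^ 5
    - 5 / 2 * x * Real.sin a ^ 2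
      * (x * (1 + x ^ 2) / 2 + x ^ 2 * (7 * Real.cos b + Real.cos a) / 4) * w x a b ^ 7)

lemma good_w : Good w := w_cont

lemma good_w1 : Good w1 := by
  intro q hq
  have := w_cont q hq
  unfold w1
  fun_prop

lemma good_w2 : Good w2 := by
  intro q hq
  have := w_cont q hq
  unfold w2
  fun_prop

lemma good_w3 : Good w3 := by
  intro q hq
  have := w_cont q hq
  unfold w3
  fun_prop

lemma good_P' : Good P' := by
  intro q hq
  have := w_cont q hq
  unfold P'
  fun_prop

lemma lin_dx (x s : ℝ) : HasDerivAt (fun x => 2 * x - s) 2 x := by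
  simpa using ((hasDerivAt_id x).const_mul 2).sub_const s

lemma w1_dx (x : ℝ) (hx : x ∈ Ioo (0:ℝ) 1) (a b : ℝ) :
    HasDerivAt (fun x => w1 x a b) (w2 x a b) x := by
  have h := w_dx hx a b
  have := ((lin_dx x (Real.cos a + Real.cos b)).const_mul (-(1 / 2))).mul (h.pow 3)
  unfold w1 w2
  refine HasDerivAt.congr_deriv this ?_
  simp
  ring

lemma w2_dx (x : ℝ) (hx : x ∈ Ioo (0:ℝ) 1) (a b : ℝ) :
    HasDerivAt (fun x => w2 x a b) (w3 x a b) x := by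
  have h := w_dx hx a b
  have := ((((lin_dx x (Real.cos a + Real.cos b)).pow 2).const_mul (3 / 4)).mul (h.pow 5)).sub
    (h.pow 3)
  unfold w2 w3
  refine HasDerivAt.congr_deriv this ?_
  simp
  ring

lemma P_da (x : ℝ) (hx : x ∈ Ioo (0:ℝ) 1) (a b : ℝ) :
    HasDerivAt (fun a => Real.sin a * ((1 - x ^ 2) * (x * (1 + x ^ 2) / 2
      + x ^ 2 / 4 * (7 * Real.cos b + Real.cos a))) * w x a b ^ 5) (P' x a b) a := by
  have h := w_da hx a b
  have := ((Real.hasDerivAt_sin a).mul (((((Real.hasDerivAt_cos a).const_add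
    (7 * Real.cos b)).const_mul (x ^ 2 / 4)).const_add (x * (1 + x ^ 2) / 2)).const_mul
      (1 - x ^ 2))).mul (h.pow 5)
  unfold P'
  refine HasDerivAt.congr_deriv this ?_
  simp
  ring

lemma int_P' {x : ℝ} (hx : x ∈ Ioo (0:ℝ) 1) (b : ℝ) : ∫ a in (0:ℝ)..π, P' x a b = 0 := by
  have hc : Continuous (fun a => P' x a b) :=
    (good_P'.cont hx).comp (f := fun a : ℝ => (a, b)) (by fun_prop)
  rw [intervalIntegral.integral_eq_sub_of_hasDerivAt (fun a _ => P_da x hx a b)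
    (hc.intervalIntegrable _ _)]
  simp

lemma w_symm (x a b : ℝ) : w x a b = w x b a := by
  unfold w R
  rw [add_comm (Real.cos a)]

lemma cert {x : ℝ} (hx : x ∈ Ioo (0:ℝ) 1) (a b : ℝ) :
    x ^ 3 * (1 + x ^ 2) * w3 x a b + 3 * x ^ 2 * (2 * x ^ 2 + 1) * w2 x a b
      + x * (7 * x ^ 2 + 1) * w1 x a b + x ^ 2 * w x a b = P' x a b + P' x b a := by
  have h := R_mul_w_sq hx a b
  have ha := Real.sin_sq a
  have hb := Real.sin_sq b
  unfold w3 w2 w1 P'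
  rw [w_symm x b a, ha, hb]
  unfold R at h
  generalize w x a b = W at *
  generalize Real.cos a = c at *
  generalize Real.cos b = d at *
  have e5 : W ^ 5 = (1 + x ^ 2 - x * (c + d)) * W ^ 7 := by linear_combination (-W ^ 5) * h
  have e3 : W ^ 3 = (1 + x ^ 2 - x * (c + d)) ^ 2 * W ^ 7 := by
    linear_combination (-W ^ 3) * h + (1 + x ^ 2 - x * (c + d)) * e5
  have e1 : W = (1 + x ^ 2 - x * (c + d)) ^ 3 * W ^ 7 := by
    linear_combination (-W) * h + (1 + x ^ 2 - x * (c + d)) * e3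
  rw [e5, e3]
  linear_combination x ^ 2 * e1

lemma lin_int {μ : Measure (ℝ × ℝ)} {f3 f2 f1 f0 g : ℝ × ℝ → ℝ} (i3 : Integrable f3 μ)
    (i2 : Integrable f2 μ) (i1 : Integrable f1 μ) (i0 : Integrable f0 μ) (c3 c2 c1 c0 : ℝ)
    (h : ∀ p, c3 * f3 p + c2 * f2 p + c1 * f1 p + c0 * f0 p = g p) (hz : ∫ p, g p ∂μ = 0) :
    c3 * (∫ p, f3 p ∂μ) + c2 * (∫ p, f2 p ∂μ) + c1 * (∫ p, f1 p ∂μ) + c0 * (∫ p, f0 p ∂μ) = 0 := by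
  have j3 := i3.const_mul c3
  have j2 := i2.const_mul c2
  have j1 := i1.const_mul c1
  have j0 := i0.const_mul c0
  have k1 := integral_add j3 j2
  have k2 := integral_add (j3.add j2) j1
  have k3 := integral_add ((j3.add j2).add j1) j0
  simp only [Pi.add_apply, integral_const_mul, h] at k1 k2 k3
  linarith

lemma cont_swap (g : ℝ → ℝ → ℝ) (h : Continuous (fun p : ℝ × ℝ => g p.1 p.2)) :
    Continuous (fun p : ℝ × ℝ => g p.2 p.1) :=
  h.comp continuous_swap

lemma cont_P'_swap {x : ℝ} (hx : x ∈ Ioo (0:ℝ) 1) :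
    Continuous (fun p : ℝ × ℝ => P' x p.2 p.1) := by
  exact cont_swap (P' x) (good_P'.cont hx)

lemma int_cert {x : ℝ} (hx : x ∈ Ioo (0:ℝ) 1) :
    ∫ p in S, (P' x p.1 p.2 + P' x p.2 p.1) = 0 := by
  have hP : Continuous (fun p : ℝ × ℝ => P' x p.1 p.2) := good_P'.cont hx
  have hQ := cont_P'_swap hx
  have h1 : ∫ p in S, P' x p.1 p.2 = 0 := by
    rw [int_eq' hP]
    simp only [int_P' hx, intervalIntegral.integral_zero]
  have h2 : ∫ p in S, P' x p.2 p.1 = 0 := by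
    rw [int_eq hQ]
    simp only [int_P' hx, intervalIntegral.integral_zero]
  have h3 := integral_add (integrable_S hP) (integrable_S hQ)
  rw [h3, h1, h2, add_zero]

lemma ode {x : ℝ} (hx : x ∈ Ioo (0:ℝ) 1) :
    x ^ 3 * (1 + x ^ 2) * J w3 x + 3 * x ^ 2 * (2 * x ^ 2 + 1) * J w2 x
      + x * (7 * x ^ 2 + 1) * J w1 x + x ^ 2 * J w x = 0 :=
  lin_int (integrable_S (good_w3.cont hx)) (integrable_S (good_w2.cont hx))
    (integrable_S (good_w1.cont hx)) (integrable_S (good_w.cont hx)) _ _ _ _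
    (fun p => cert hx p.1 p.2) (int_cert hx)

lemma Xi_eq {x : ℝ} (hx : x ∈ Ioo (0:ℝ) 1) : Xi200 x = 1 / 4 * J w x := by
  unfold Xi200 J
  rw [int_eq (good_w.cont hx)]
  rfl

lemma deriv_step {f G G' : ℝ → ℝ}
    (hf : ∀ x ∈ Ioo (0:ℝ) 1, f x = 1 / 4 * G x)
    (hG : ∀ x ∈ Ioo (0:ℝ) 1, HasDerivAt G (G' x) x) :
    ∀ x ∈ Ioo (0:ℝ) 1, deriv f x = 1 / 4 * G' x := by
  intro x hx
  have : f =ᶠ[𝓝 x] fun y => 1 / 4 * G y := by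
    filter_upwards [isOpen_Ioo.mem_nhds hx] with y hy using hf y hy
  rw [this.deriv_eq]
  exact ((hG x hx).const_mul _).deriv

end XiAux

open XiAux

theorem Xi200_third_order_ODE (x : ℝ) (hx0 : 0 < x) (hx1 : x < 1) :
    x ^ 3 * (1 + x ^ 2) * iteratedDeriv 3 Xi200 x
      + 3 * x ^ 2 * (2 * x ^ 2 + 1) * iteratedDeriv 2 Xi200 x
      + x * (7 * x ^ 2 + 1) * deriv Xi200 x
      + x ^ 2 * Xi200 x = 0 := by
  have hx : x ∈ Set.Ioo (0:ℝ) 1 := ⟨hx0, hx1⟩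
  have d1 := deriv_step (fun y hy => Xi_eq hy)
    (fun y hy => J_deriv good_w good_w1 (fun x hx a b => w_dx hx a b) hy)
  have d2 := deriv_step d1 (fun y hy => J_deriv good_w1 good_w2 w1_dx hy)
  have d3 := deriv_step d2 (fun y hy => J_deriv good_w2 good_w3 w2_dx hy)
  have e2 : iteratedDeriv 2 Xi200 = deriv (deriv Xi200) := by
    rw [iteratedDeriv_succ, iteratedDeriv_one]
  have e3 : iteratedDeriv 3 Xi200 = deriv (deriv (deriv Xi200)) := by
    rw [iteratedDeriv_succ, e2]
  rw [e3, e2, d3 x hx, d2 x hx, d1 x hx, Xi_eq hx]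
  linear_combination (1 / 4) * ode hx
end
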